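/- For every prime power q, the number of strong realizations of the hyperfiguration h_2 in P^3(F_q) is A_{h_2}(4,q) = a(q) · |PGL_4(F_q)|, where a(q) = 1 if q is even and a(q) = 0 if q is odd. In particular there are no such realizations when q is odd. -/

import Mathlib

open scoped LinearAlgebra.Projectivization

/-- Three points of `ℙ³(F_q)` are collinear if vector representatives of them span a
subspace of `F_q^4` of dimension at most 2. -/
def Collinear3 (F : Type) [Field F] (x y z : ℙ F (Fin 4 → F)) : Prop :=
  Module.finrank F ↥(x.submodule ⊔ y.submodule ⊔ z.submodule) ≤ 2

/-- Four points of `ℙ³(F_q)` are coplanar if vector representatives of them span a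
subspace of `F_q^4` of dimension at most 3. -/
def Coplanar4 (F : Type) [Field F] (x y z w : ℙ F (Fin 4 → F)) : Prop :=
  Module.finrank F ↥(x.submodule ⊔ y.submodule ⊔ z.submodule ⊔ w.submodule) ≤ 3

/-- A strong realization in `ℙ³(F_q)` of a configuration on points `{0,…,6}` given by a
list of planes and a list of lines: an injective map `σ` such that a triple of image points
is collinear iff its index set is contained in a listed line, and four image points are
coplanar iff their index set is contained in a listed plane. -/
def IsConfigReal (F : Type) [Field F] (planes lines : Finset (Finset (Fin 7)))
    (σ : Fin 7 → ℙ F (Fin 4 → F)) : Prop :=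
  Function.Injective σ ∧
    (∀ a b c : Fin 7, a ≠ b → a ≠ c → b ≠ c →
      (Collinear3 F (σ a) (σ b) (σ c) ↔ ∃ l ∈ lines, ({a, b, c} : Finset (Fin 7)) ⊆ l)) ∧
    (∀ a b c d : Fin 7, a ≠ b → a ≠ c → a ≠ d → b ≠ c → b ≠ d → c ≠ d →
      (Coplanar4 F (σ a) (σ b) (σ c) (σ d) ↔
        ∃ h ∈ planes, ({a, b, c, d} : Finset (Fin 7)) ⊆ h))

/-- Planes of the hyperfiguration `h₁`. -/
def h1planes : Finset (Finset (Fin 7)) :=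
  {{0, 1, 2, 3}, {0, 1, 4, 5}, {0, 2, 4, 6}, {1, 2, 5, 6}, {1, 3, 4, 6}, {2, 3, 4, 5}}

/-- Planes of the hyperfiguration `h₂` (the complement of the Fano plane). -/
def h2planes : Finset (Finset (Fin 7)) :=
  {{0, 1, 2, 3}, {0, 1, 4, 5}, {0, 2, 4, 6}, {0, 3, 5, 6}, {1, 2, 5, 6}, {1, 3, 4, 6},
    {2, 3, 4, 5}}

/-- Planes of the hyperfiguration `h₃`. -/
def h3planes : Finset (Finset (Fin 7)) :=
  {{0, 1, 2, 3}, {0, 1, 2, 4}, {0, 1, 2, 5}, {0, 1, 2, 6}, {0, 3, 4, 5}, {1, 3, 4, 6},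
    {2, 3, 5, 6}}

/-- Lines of the hyperfiguration `h₃`. -/
def h3lines : Finset (Finset (Fin 7)) := {{0, 1, 2}}

/-- Planes of the hyperfiguration `h₅`. -/
def h5planes : Finset (Finset (Fin 7)) :=
  {{0, 1, 2, 3, 4}, {0, 1, 2, 3, 5}, {0, 1, 2, 3, 6}, {0, 4, 5, 6}, {1, 4, 5, 6},
    {2, 4, 5, 6}, {3, 4, 5, 6}}

/-- Lines of the hyperfiguration `h₅`. -/
def h5lines : Finset (Finset (Fin 7)) := {{0, 1, 2, 3}, {4, 5, 6}}

/-!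
Choose coordinates in which the points `0, 1, 2, 4` of a realization are the coordinate points.
The planes through three of them say which coordinate of each of the points `3, 5, 6` vanishes, and
the planes `{2,3,4,5}`, `{1,3,4,6}`, `{1,2,5,6}` then allow a diagonal rescaling to
`3 = [1,1,1,0]`, `5 = [1,1,0,1]`, `6 = [1,0,1,1]`. The remaining plane `{0,3,5,6}` has determinant
`-2` on these vectors, which forces characteristic two. Hence in characteristic two the realizations
form a single orbit of `GL₄`; the stabilizer of a realization consists of the scalars, so they are
counted by `PGL₄`.
-/

open Projectivization Matrix
open scoped MatrixGroups

section ProjectiveSpace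

variable {ι K V : Type*} [Field K] [AddCommGroup V] [Module K V]

theorem dependent_mk_iff {v : ι → V} (hv : ∀ i, v i ≠ 0) :
    Dependent (fun i ↦ mk K (v i) (hv i)) ↔ ¬ LinearIndependent K v :=
  ⟨fun h hli ↦ dependent_iff_not_independent.1 h (.mk v hv hli), .mk v hv⟩

theorem dependent_iff_finrank_iSup_lt [Fintype ι] (p : ι → ℙ K V) :
    Dependent p ↔ Module.finrank K ↥(⨆ i, (p i).submodule) < Fintype.card ι := by
  have hspan : ⨆ i, (p i).submodule = Submodule.span K (Set.range (Projectivization.rep ∘ p)) := by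
    simp [Submodule.span_range_eq_iSup, submodule_eq]
  rw [dependent_iff, linearIndependent_iff_card_le_finrank_span, not_le, hspan, Set.finrank]

theorem projectivization_submodule_smul {G : Type*} [Group G] [DistribMulAction G V]
    [SMulCommClass G K V] (g : G) (x : ℙ K V) :
    (g • x).submodule = x.submodule.map (DistribMulAction.toLinearEquiv K V g).toLinearMap := by
  induction x using Projectivization.ind with
  | _ v hv => simp [submodule_mk, Submodule.map_span]

variable {n : Type*} [Fintype n] [DecidableEq n]

theorem dependent_mk_iff_det_eq_zero {A : Matrix n n K} (hA : ∀ i, A i ≠ 0) :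
    Dependent (fun i ↦ mk K (A i) (hA i)) ↔ A.det = 0 := by
  have hrows := linearIndependent_rows_iff_isUnit (A := A)
  rw [isUnit_iff_isUnit_det, isUnit_iff_ne_zero] at hrows
  exact (dependent_mk_iff hA).trans (not_iff_comm.1 hrows.symm)

theorem exists_smul_mk_of_independent (p : ι → ℙ K (n → K)) (s : n → ι)
    (hs : Independent (p ∘ s)) :
    ∃ (g : GL n K) (v : ι → n → K) (hv : ∀ i, v i ≠ 0),
      (∀ j, v (s j) = Pi.single j 1) ∧ p = g • fun i ↦ mk K (v i) (hv i) := by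
  have hcols := independent_iff.1 hs
  let M : Matrix n n K := (Matrix.of fun j ↦ (p (s j)).rep)ᵀ
  have hM : IsUnit M := linearIndependent_cols_iff_isUnit.1 hcols
  refine ⟨hM.unit, fun i ↦ hM.unit⁻¹ • (p i).rep,
    fun i ↦ (smul_ne_zero_iff_ne _).2 (p i).rep_nonzero, fun j ↦ ?_, ?_⟩
  · rw [inv_smul_eq_iff]
    exact (mulVec_single_one M j).symm
  · ext i
    simp [mk_rep]

theorem smul_eq_self_of_mem_center {g : GL n K} (hg : g ∈ Subgroup.center (GL n K))
    (x : ℙ K (n → K)) : g • x = x := by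
  rw [GeneralLinearGroup.center_eq_range_scalar] at hg
  obtain ⟨u, rfl⟩ := hg
  induction x using Projectivization.ind with
  | _ v hv =>
    rw [smul_mk, mk_eq_mk_iff]
    exact ⟨u, by simp [Units.smul_def]⟩

theorem eq_diagonal_of_mulVec_single_eq_smul {A : Matrix n n K} {c : n → K}
    (h : ∀ j, A *ᵥ Pi.single j 1 = c j • Pi.single j 1) : A = Matrix.diagonal c := by
  refine ext_of_mulVec_single fun j ↦ ?_
  rw [h, diagonal_mulVec_single, mul_one, ← Pi.single_smul', smul_eq_mul, mul_one]

theorem card_center_GL (n R : Type*) [Fintype n] [DecidableEq n] [Nonempty n] [CommRing R] :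
    Nat.card (Subgroup.center (GL n R)) = Nat.card Rˣ := by
  rw [GeneralLinearGroup.center_eq_range_scalar]
  refine (Nat.card_congr (MonoidHom.ofInjective fun a b hab ↦ Units.ext ?_).toEquiv).symm
  exact scalar_inj.1 (congrArg Units.val hab)

theorem card_PGL (n F : Type*) [Fintype n] [DecidableEq n] [Nonempty n] [Field F] [Fintype F] :
    Nat.card PGL(n, F) = Nat.card (GL n F) / (Fintype.card F - 1) := by
  have hcard : Nat.card PGL(n, F) * Nat.card Fˣ = Nat.card (GL n F) := by
    rw [← card_center_GL n F]
    exact (Subgroup.center (GL n F)).index_mul_card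
  rw [← hcard, ← Nat.card_eq_fintype_card, ← Nat.card_units, Nat.mul_div_cancel _ Nat.card_pos]

theorem det_fin_four {R : Type*} [CommRing R] (A : Matrix (Fin 4) (Fin 4) R) :
    A.det =
      A 0 0 * (A 1 1 * (A 2 2 * A 3 3 - A 2 3 * A 3 2) - A 1 2 * (A 2 1 * A 3 3 - A 2 3 * A 3 1)
        + A 1 3 * (A 2 1 * A 3 2 - A 2 2 * A 3 1))
      - A 0 1 * (A 1 0 * (A 2 2 * A 3 3 - A 2 3 * A 3 2) - A 1 2 * (A 2 0 * A 3 3 - A 2 3 * A 3 0)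
        + A 1 3 * (A 2 0 * A 3 2 - A 2 2 * A 3 0))
      + A 0 2 * (A 1 0 * (A 2 1 * A 3 3 - A 2 3 * A 3 1) - A 1 1 * (A 2 0 * A 3 3 - A 2 3 * A 3 0)
        + A 1 3 * (A 2 0 * A 3 1 - A 2 1 * A 3 0))
      - A 0 3 * (A 1 0 * (A 2 1 * A 3 2 - A 2 2 * A 3 1) - A 1 1 * (A 2 0 * A 3 2 - A 2 2 * A 3 0)
        + A 1 2 * (A 2 0 * A 3 1 - A 2 1 * A 3 0)) := by
  rw [det_succ_row_zero, Fin.sum_univ_four]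
  simp only [det_fin_three, submatrix_apply, Fin.succAbove, Fin.reduceSucc, Fin.reduceCastSucc,
    Fin.reduceLT, Fin.succ_zero_eq_one, Fin.succ_one_eq_two, Fin.castSucc_zero, Fin.castSucc_one,
    Fin.coe_ofNat_eq_mod, lt_self_iff_false, Fin.not_lt_zero, zero_lt_one, ↓reduceIte]
  ring

end ProjectiveSpace

section Configuration

variable {F : Type} [Field F]

theorem coplanar4_iff_dependent (x y z w : ℙ F (Fin 4 → F)) :
    Coplanar4 F x y z w ↔ Dependent ![x, y, z, w] := by
  have hsup : ⨆ i, (![x, y, z, w] i).submodule =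
      x.submodule ⊔ y.submodule ⊔ z.submodule ⊔ w.submodule := by
    simp [← Finset.sup_univ_eq_iSup, Fin.univ_succ, sup_assoc]
  rw [dependent_iff_finrank_iSup_lt, hsup, Fintype.card_fin, Nat.lt_succ_iff, Coplanar4]

theorem coplanar4_mk_iff {ι : Type*} {v : ι → Fin 4 → F} (hv : ∀ i, v i ≠ 0) (a b c d : ι) :
    Coplanar4 F (mk F (v a) (hv a)) (mk F (v b) (hv b)) (mk F (v c) (hv c)) (mk F (v d) (hv d)) ↔
      (Matrix.of ![v a, v b, v c, v d]).det = 0 := by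
  have hA : ∀ i, Matrix.of ![v a, v b, v c, v d] i ≠ 0 := by
    intro i
    fin_cases i <;> exact hv _
  rw [coplanar4_iff_dependent, ← dependent_mk_iff_det_eq_zero hA]
  congr! 1
  ext i
  fin_cases i <;> rfl

theorem collinear3_smul (g : GL (Fin 4) F) (x y z : ℙ F (Fin 4 → F)) :
    Collinear3 F (g • x) (g • y) (g • z) ↔ Collinear3 F x y z := by
  rw [Collinear3, projectivization_submodule_smul, projectivization_submodule_smul,
    projectivization_submodule_smul, ← Submodule.map_sup, ← Submodule.map_sup,
    LinearEquiv.finrank_map_eq, Collinear3]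

theorem coplanar4_smul (g : GL (Fin 4) F) (x y z w : ℙ F (Fin 4 → F)) :
    Coplanar4 F (g • x) (g • y) (g • z) (g • w) ↔ Coplanar4 F x y z w := by
  rw [Coplanar4, projectivization_submodule_smul, projectivization_submodule_smul,
    projectivization_submodule_smul, projectivization_submodule_smul, ← Submodule.map_sup,
    ← Submodule.map_sup, ← Submodule.map_sup, LinearEquiv.finrank_map_eq, Coplanar4]

theorem Collinear3.coplanar4 {x y z : ℙ F (Fin 4 → F)} (h : Collinear3 F x y z)
    (w : ℙ F (Fin 4 → F)) : Coplanar4 F x y z w := by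
  have hle := Submodule.finrank_add_le_finrank_add_finrank
    (x.submodule ⊔ y.submodule ⊔ z.submodule) w.submodule
  rw [finrank_submodule] at hle
  exact hle.trans (Nat.succ_le_succ h)

theorem collinear3_self_left (x y : ℙ F (Fin 4 → F)) : Collinear3 F x x y := by
  have hle := Submodule.finrank_add_le_finrank_add_finrank x.submodule y.submodule
  rwa [finrank_submodule, finrank_submodule, ← sup_idem x.submodule] at hle

variable {planes lines : Finset (Finset (Fin 7))} {σ : Fin 7 → ℙ F (Fin 4 → F)}

theorem isConfigReal_smul_iff (g : GL (Fin 4) F) :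
    IsConfigReal F planes lines (g • σ) ↔ IsConfigReal F planes lines σ := by
  have hinj : Function.Injective (g • σ) ↔ Function.Injective σ :=
    (MulAction.injective g).of_comp_iff σ
  simp only [IsConfigReal, hinj, Pi.smul_apply, collinear3_smul, coplanar4_smul]

-- A collinear triple is coplanar with every fourth point, and a repeated point is collinear with
-- every third one; so injectivity and the absence of lines follow from the coplanarity conditions.
theorem isConfigReal_empty_iff
    (hplanes : ∀ a b c : Fin 7, a ≠ b → a ≠ c → b ≠ c → ∃ d, a ≠ d ∧ b ≠ d ∧ c ≠ d ∧
      ¬ ∃ h ∈ planes, ({a, b, c, d} : Finset (Fin 7)) ⊆ h) :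
    IsConfigReal F planes ∅ σ ↔
      ∀ a b c d : Fin 7, a ≠ b → a ≠ c → a ≠ d → b ≠ c → b ≠ d → c ≠ d →
        (Coplanar4 F (σ a) (σ b) (σ c) (σ d) ↔
          ∃ h ∈ planes, ({a, b, c, d} : Finset (Fin 7)) ⊆ h) := by
  refine ⟨fun h ↦ h.2.2, fun h ↦ ?_⟩
  have hnoline : ∀ a b c : Fin 7, a ≠ b → a ≠ c → b ≠ c → ¬ Collinear3 F (σ a) (σ b) (σ c) := by
    intro a b c hab hac hbc hcol
    obtain ⟨d, had, hbd, hcd, hd⟩ := hplanes a b c hab hac hbc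
    exact hd ((h a b c d hab hac had hbc hbd hcd).1 (hcol.coplanar4 (σ d)))
  refine ⟨fun a b hσ ↦ ?_, fun a b c hab hac hbc ↦ by simp [hnoline a b c hab hac hbc], h⟩
  by_contra hab
  have hthird : ∀ a b : Fin 7, ∃ c, c ≠ a ∧ c ≠ b := by decide
  obtain ⟨c, hca, hcb⟩ := hthird a b
  exact hnoline a b c hab hca.symm hcb.symm (hσ ▸ collinear3_self_left (σ a) (σ c))

end Configuration

section ComplementOfFano

/-- Vectors of the model of `h₂`: the seven odd-weight vectors of `𝔽₂⁴` other than `(0,1,1,1)`,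
i.e. the affine space `AG(3,2)` minus a point, lifted to `0, 1` in an arbitrary ring. -/
def h2Vec (R : Type*) [Zero R] [One R] : Fin 7 → Fin 4 → R :=
  ![![1, 0, 0, 0], ![0, 1, 0, 0], ![0, 0, 1, 0], ![1, 1, 1, 0], ![0, 0, 0, 1], ![1, 1, 0, 1],
    ![1, 0, 1, 1]]

theorem comp_h2Vec {R S : Type*} [NonAssocSemiring R] [NonAssocSemiring S] (f : R →+* S)
    (i : Fin 7) : f ∘ h2Vec R i = h2Vec S i := by
  ext j
  fin_cases i <;> fin_cases j <;> simp [h2Vec]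

theorem h2Vec_ne_zero (R : Type*) [MulZeroOneClass R] [Nontrivial R] (i : Fin 7) :
    h2Vec R i ≠ 0 := by
  fin_cases i <;> simp [h2Vec]

theorem det_h2Vec_zmod_two_eq_zero_iff : ∀ a b c d : Fin 7,
    a ≠ b → a ≠ c → a ≠ d → b ≠ c → b ≠ d → c ≠ d →
      ((Matrix.of ![h2Vec (ZMod 2) a, h2Vec _ b, h2Vec _ c, h2Vec _ d]).det = 0 ↔
        ∃ h ∈ h2planes, ({a, b, c, d} : Finset (Fin 7)) ⊆ h) := by
  simp only [det_fin_four]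
  decide +kernel

theorem det_h2Vec_eq_zero_iff_zmod_two (R : Type*) [CommRing R] [CharP R 2] (a b c d : Fin 7) :
    (Matrix.of ![h2Vec R a, h2Vec R b, h2Vec R c, h2Vec R d]).det = 0 ↔
      (Matrix.of ![h2Vec (ZMod 2) a, h2Vec _ b, h2Vec _ c, h2Vec _ d]).det = 0 := by
  let f := ZMod.castHom (dvd_refl 2) R
  have hmap : Matrix.of ![h2Vec R a, h2Vec R b, h2Vec R c, h2Vec R d] =
      f.mapMatrix (Matrix.of ![h2Vec (ZMod 2) a, h2Vec _ b, h2Vec _ c, h2Vec _ d]) := by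
    ext i j
    fin_cases i <;> exact (congrFun (comp_h2Vec f _) j).symm
  rw [hmap, ← RingHom.map_det, map_eq_zero_iff f (ZMod.castHom_injective R)]

theorem exists_not_subset_h2planes : ∀ a b c : Fin 7, a ≠ b → a ≠ c → b ≠ c →
    ∃ d, a ≠ d ∧ b ≠ d ∧ c ≠ d ∧ ¬ ∃ h ∈ h2planes, ({a, b, c, d} : Finset (Fin 7)) ⊆ h := by
  decide +kernel

variable {F : Type} [Field F] {σ : Fin 7 → ℙ F (Fin 4 → F)}

variable (F) in
/-- The model of `h₂` in `ℙ³`, a strong realization in characteristic two. -/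
def h2Point (i : Fin 7) : ℙ F (Fin 4 → F) :=
  mk F (h2Vec F i) (h2Vec_ne_zero F i)

theorem isConfigReal_h2Point [CharP F 2] : IsConfigReal F h2planes ∅ (h2Point F) := by
  rw [isConfigReal_empty_iff exists_not_subset_h2planes]
  intro a b c d hab hac had hbc hbd hcd
  rw [← det_h2Vec_zmod_two_eq_zero_iff a b c d hab hac had hbc hbd hcd,
    ← det_h2Vec_eq_zero_iff_zmod_two F]
  exact coplanar4_mk_iff (h2Vec_ne_zero F) a b c d

/-- Vectors with the dependencies of `h₂`, the vectors `0, 1, 2, 4` being the standard basis. -/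
structure IsH2Coordinates (v : Fin 7 → Fin 4 → F) : Prop where
  zero : v 0 = ![1, 0, 0, 0]
  one : v 1 = ![0, 1, 0, 0]
  two : v 2 = ![0, 0, 1, 0]
  four : v 4 = ![0, 0, 0, 1]
  det_eq_zero_iff : ∀ a b c d : Fin 7, a ≠ b → a ≠ c → a ≠ d → b ≠ c → b ≠ d → c ≠ d →
    ((Matrix.of ![v a, v b, v c, v d]).det = 0 ↔
      ∃ h ∈ h2planes, ({a, b, c, d} : Finset (Fin 7)) ⊆ h)

namespace IsH2Coordinates

variable {v : Fin 7 → Fin 4 → F}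

theorem det_eq_zero (hv : IsH2Coordinates v) (a b c d : Fin 7)
    (h : (a ≠ b ∧ a ≠ c ∧ a ≠ d ∧ b ≠ c ∧ b ≠ d ∧ c ≠ d) ∧
      ∃ h ∈ h2planes, ({a, b, c, d} : Finset (Fin 7)) ⊆ h := by decide) :
    (Matrix.of ![v a, v b, v c, v d]).det = 0 := by
  obtain ⟨⟨hab, hac, had, hbc, hbd, hcd⟩, hplane⟩ := h
  exact (hv.det_eq_zero_iff a b c d hab hac had hbc hbd hcd).2 hplane

theorem det_ne_zero (hv : IsH2Coordinates v) (a b c d : Fin 7)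
    (h : (a ≠ b ∧ a ≠ c ∧ a ≠ d ∧ b ≠ c ∧ b ≠ d ∧ c ≠ d) ∧
      ¬ ∃ h ∈ h2planes, ({a, b, c, d} : Finset (Fin 7)) ⊆ h := by decide) :
    (Matrix.of ![v a, v b, v c, v d]).det ≠ 0 := by
  obtain ⟨⟨hab, hac, had, hbc, hbd, hcd⟩, hplane⟩ := h
  exact mt (hv.det_eq_zero_iff a b c d hab hac had hbc hbd hcd).1 hplane

theorem coord_eq_zero (hv : IsH2Coordinates v) : v 3 3 = 0 ∧ v 5 2 = 0 ∧ v 6 1 = 0 := by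
  refine ⟨?_, ?_, ?_⟩
  · simpa [det_fin_four, hv.zero, hv.one, hv.two] using hv.det_eq_zero 0 1 2 3
  · simpa [det_fin_four, hv.zero, hv.one, hv.four] using hv.det_eq_zero 0 1 4 5
  · simpa [det_fin_four, hv.zero, hv.two, hv.four] using hv.det_eq_zero 0 2 4 6

theorem coord_ne_zero (hv : IsH2Coordinates v) :
    (v 3 0 ≠ 0 ∧ v 3 1 ≠ 0 ∧ v 3 2 ≠ 0) ∧ (v 5 0 ≠ 0 ∧ v 5 3 ≠ 0) ∧ v 6 0 ≠ 0 := by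
  refine ⟨⟨?_, ?_, ?_⟩, ⟨?_, ?_⟩, ?_⟩
  · simpa [det_fin_four, hv.one, hv.two, hv.four] using hv.det_ne_zero 1 2 3 4
  · simpa [det_fin_four, hv.zero, hv.two, hv.four] using hv.det_ne_zero 0 2 3 4
  · simpa [det_fin_four, hv.zero, hv.one, hv.four] using hv.det_ne_zero 0 1 3 4
  · simpa [det_fin_four, hv.one, hv.two, hv.four] using hv.det_ne_zero 1 2 4 5
  · simpa [det_fin_four, hv.zero, hv.one, hv.two] using hv.det_ne_zero 0 1 2 5
  · simpa [det_fin_four, hv.one, hv.two, hv.four] using hv.det_ne_zero 1 2 4 6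

theorem coord_mul_eq (hv : IsH2Coordinates v) :
    v 3 0 * v 5 1 = v 3 1 * v 5 0 ∧ v 3 0 * v 6 2 = v 3 2 * v 6 0 ∧
      v 5 0 * v 6 3 = v 5 3 * v 6 0 := by
  obtain ⟨h3, h5, h6⟩ := hv.coord_eq_zero
  have h2345 := hv.det_eq_zero 2 3 4 5
  have h1346 := hv.det_eq_zero 1 3 4 6
  have h1256 := hv.det_eq_zero 1 2 5 6
  simp only [det_fin_four, hv.one, hv.two, hv.four, of_apply, cons_val, h3, h5, h6]
    at h2345 h1346 h1256
  exact ⟨by linear_combination -h2345, by linear_combination h1346, by linear_combination h1256⟩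

theorem two_eq_zero (hv : IsH2Coordinates v) : (2 : F) = 0 := by
  obtain ⟨h3, h5, h6⟩ := hv.coord_eq_zero
  obtain ⟨⟨_, h31, h32⟩, ⟨h50, h53⟩, h60⟩ := hv.coord_ne_zero
  obtain ⟨h35, h36, h56⟩ := hv.coord_mul_eq
  have h0356 : v 3 1 * v 5 3 * v 6 2 + v 3 2 * v 5 1 * v 6 3 = 0 := by
    have hdet := hv.det_eq_zero 0 3 5 6
    simp only [det_fin_four, hv.zero, of_apply, cons_val, h3, h5, h6] at hdet
    linear_combination -hdet
  have hprod : 2 * (v 3 1 * v 3 2 * v 5 0 * v 5 3 * v 6 0) = 0 := by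
    linear_combination v 3 0 * v 5 0 * h0356 - v 3 1 * v 5 0 * v 5 3 * h36
      - v 3 2 * v 5 0 * v 6 3 * h35 - v 3 1 * v 3 2 * v 5 0 * h56
  simpa [h31, h32, h50, h53, h60] using hprod

theorem exists_smul_mul_h2Vec_eq (hv : IsH2Coordinates v) :
    ∃ t : Fin 4 → F, (∀ j, t j ≠ 0) ∧ ∀ i, ∃ c : F, c • (t * h2Vec F i) = v i := by
  obtain ⟨h3, h5, h6⟩ := hv.coord_eq_zero
  obtain ⟨⟨h30, h31, h32⟩, ⟨h50, h53⟩, _⟩ := hv.coord_ne_zero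
  obtain ⟨h35, h36, h56⟩ := hv.coord_mul_eq
  let t : Fin 4 → F := ![1, v 3 1 / v 3 0, v 3 2 / v 3 0, v 5 3 / v 5 0]
  refine ⟨t, fun j ↦ ?_, fun i ↦ ⟨![1, (t 1)⁻¹, (t 2)⁻¹, v 3 0, (t 3)⁻¹, v 5 0, v 6 0] i, ?_⟩⟩
  · fin_cases j <;> simp [t, *]
  · have h51 : v 5 0 * (v 3 1 / v 3 0) = v 5 1 := by
      rw [← mul_div_assoc, div_eq_iff h30]
      linear_combination -h35
    have h62 : v 6 0 * (v 3 2 / v 3 0) = v 6 2 := by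
      rw [← mul_div_assoc, div_eq_iff h30]
      linear_combination -h36
    have h63 : v 6 0 * (v 5 3 / v 5 0) = v 6 3 := by
      rw [← mul_div_assoc, div_eq_iff h50]
      linear_combination -h56
    ext j
    fin_cases i <;> fin_cases j <;>
      simp [t, h2Vec, hv.zero, hv.one, hv.two, hv.four, mul_div_cancel₀, *]

end IsH2Coordinates

theorem IsConfigReal.exists_isH2Coordinates (hσ : IsConfigReal F h2planes ∅ σ) :
    ∃ (g : GL (Fin 4) F) (v : Fin 7 → Fin 4 → F) (hv : ∀ i, v i ≠ 0),
      IsH2Coordinates v ∧ σ = g • fun i ↦ mk F (v i) (hv i) := by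
  have hind : Independent (σ ∘ ![0, 1, 2, 4]) := by
    have hncop : ¬ Coplanar4 F (σ 0) (σ 1) (σ 2) (σ 4) := by
      rw [hσ.2.2 0 1 2 4 (by decide) (by decide) (by decide) (by decide) (by decide) (by decide)]
      decide
    rw [coplanar4_iff_dependent, ← independent_iff_not_dependent] at hncop
    convert hncop using 1
    ext i
    fin_cases i <;> rfl
  obtain ⟨g, v, hv, hbasis, rfl⟩ := exists_smul_mk_of_independent σ _ hind
  have hv_real := (isConfigReal_smul_iff g).1 hσ
  refine ⟨g, v, hv, ?_, rfl⟩
  exact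
    { zero := (hbasis 0).trans (by ext j; fin_cases j <;> rfl)
      one := (hbasis 1).trans (by ext j; fin_cases j <;> rfl)
      two := (hbasis 2).trans (by ext j; fin_cases j <;> rfl)
      four := (hbasis 3).trans (by ext j; fin_cases j <;> rfl)
      det_eq_zero_iff := fun a b c d hab hac had hbc hbd hcd ↦
        (coplanar4_mk_iff hv a b c d).symm.trans
          (hv_real.2.2 a b c d hab hac had hbc hbd hcd) }

theorem IsConfigReal.two_eq_zero (hσ : IsConfigReal F h2planes ∅ σ) : (2 : F) = 0 := by
  obtain ⟨_, _, _, hcoord, _⟩ := hσ.exists_isH2Coordinates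
  exact hcoord.two_eq_zero

theorem IsConfigReal.mem_orbit_h2Point (hσ : IsConfigReal F h2planes ∅ σ) :
    σ ∈ MulAction.orbit (GL (Fin 4) F) (h2Point F) := by
  obtain ⟨g, v, hv, hcoord, rfl⟩ := hσ.exists_isH2Coordinates
  obtain ⟨t, ht, hscale⟩ := hcoord.exists_smul_mul_h2Vec_eq
  have hdet : (Matrix.diagonal t).det ≠ 0 := by
    rw [det_diagonal]
    exact Finset.prod_ne_zero_iff.2 fun j _ ↦ ht j
  let D := GeneralLinearGroup.mkOfDetNeZero (Matrix.diagonal t) hdet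
  refine ⟨g * D, (mul_smul g D _).trans (congrArg (g • ·) ?_)⟩
  ext i
  obtain ⟨c, hc⟩ := hscale i
  refine ((mk_eq_mk_iff' _ _ _ _ _).2 ⟨c, ?_⟩).symm
  rw [← hc]
  congr 1
  ext j
  exact mulVec_diagonal t (h2Vec F i) j

theorem setOf_isConfigReal_h2planes_eq_orbit [CharP F 2] :
    {σ | IsConfigReal F h2planes ∅ σ} = MulAction.orbit (GL (Fin 4) F) (h2Point F) := by
  refine Set.Subset.antisymm (fun σ hσ ↦ hσ.mem_orbit_h2Point) ?_
  rintro _ ⟨g, rfl⟩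
  exact (isConfigReal_smul_iff g).2 isConfigReal_h2Point

theorem stabilizer_h2Point :
    MulAction.stabilizer (GL (Fin 4) F) (h2Point F) = Subgroup.center (GL (Fin 4) F) := by
  refine le_antisymm (fun g hg ↦ ?_) fun g hg ↦ funext fun i ↦ smul_eq_self_of_mem_center hg _
  have heigen : ∀ i, ∃ c : F, c • h2Vec F i = g.val *ᵥ h2Vec F i := fun i ↦
    (mk_eq_mk_iff' _ _ _ _ _).1 (congrFun hg i)
  choose c hc using heigen
  have hdiag : g.val = Matrix.diagonal ![c 0, c 1, c 2, c 4] := by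
    refine eq_diagonal_of_mulVec_single_eq_smul fun j ↦ ?_
    have hbasis : h2Vec F (![0, 1, 2, 4] j) = Pi.single j 1 := by
      ext k
      fin_cases j <;> fin_cases k <;> rfl
    rw [← hbasis, ← hc]
    fin_cases j <;> rfl
  have hcoord : ∀ i j, c i * h2Vec F i j = ![c 0, c 1, c 2, c 4] j * h2Vec F i j := fun i j ↦ by
    rw [← mulVec_diagonal, ← hdiag, ← hc, Pi.smul_apply, smul_eq_mul]
  have h30 : c 3 = c 0 := by simpa [h2Vec] using hcoord 3 0
  have h31 : c 3 = c 1 := by simpa [h2Vec] using hcoord 3 1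
  have h32 : c 3 = c 2 := by simpa [h2Vec] using hcoord 3 2
  have h50 : c 5 = c 0 := by simpa [h2Vec] using hcoord 5 0
  have h53 : c 5 = c 4 := by simpa [h2Vec] using hcoord 5 3
  rw [GeneralLinearGroup.mem_center_iff_val_mem_range_scalar, hdiag]
  refine ⟨c 0, congrArg Matrix.diagonal (funext fun j ↦ ?_)⟩
  fin_cases j
  exacts [rfl, h30.symm.trans h31, h30.symm.trans h32, h50.symm.trans h53]

theorem card_isConfigReal_h2planes [CharP F 2] :
    Nat.card {σ : Fin 7 → ℙ F (Fin 4 → F) // IsConfigReal F h2planes ∅ σ} =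
      Nat.card PGL(Fin 4, F) := calc
  _ = (MulAction.orbit (GL (Fin 4) F) (h2Point F)).ncard :=
    congrArg Set.ncard setOf_isConfigReal_h2planes_eq_orbit
  _ = (Subgroup.center (GL (Fin 4) F)).index := by
    rw [← MulAction.index_stabilizer, stabilizer_h2Point]

end ComplementOfFano

theorem even_card_iff_two_eq_zero (F : Type*) [Field F] [Fintype F] :
    Even (Fintype.card F) ↔ (2 : F) = 0 := by
  rw [Nat.even_iff, ← FiniteField.even_card_iff_char_two, ringChar.eq_iff]
  exact ⟨fun _ ↦ CharTwo.two_eq_zero, CharTwo.of_one_ne_zero_of_two_eq_zero one_ne_zero⟩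

/-- `A_{h₂}(4,q) = a(q) · |PGL₄(F_q)|`; in particular there are no strong realizations of
`h₂` when `q` is odd. -/
theorem Ah2_formula (F : Type) [Field F] [Fintype F] (q : ℕ) (hq : q = Fintype.card F) :
    Nat.card {σ : Fin 7 → ℙ F (Fin 4 → F) // IsConfigReal F h2planes ∅ σ} =
        (if Even q then 1 else 0) * (Nat.card (GL (Fin 4) F) / (q - 1)) ∧
      (¬ Even q → Nat.card {σ : Fin 7 → ℙ F (Fin 4 → F) // IsConfigReal F h2planes ∅ σ} = 0) := by
  subst hq
  have heven := even_card_iff_two_eq_zero F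
  by_cases h2 : (2 : F) = 0
  · have : CharP F 2 := CharTwo.of_one_ne_zero_of_two_eq_zero one_ne_zero h2
    simp [heven, h2, card_isConfigReal_h2planes, card_PGL (Fin 4) F]
  · have : IsEmpty {σ : Fin 7 → ℙ F (Fin 4 → F) // IsConfigReal F h2planes ∅ σ} :=
      ⟨fun σ ↦ h2 σ.2.two_eq_zero⟩
    simp [heven, h2]
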